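/- arXiv:1309.7208 — 3 statements merged into one kernel-verified Lean document; each statement's English description precedes it below -/
import Mathlib

section
/- Let 0 < r⁻ < r⁺, ε > 0, let m be a positive integer, and let ω : [r⁻, r⁺] → ℝ be continuous and strictly increasing with ω(r⁻) = a⁻ and ω(r⁺) = a⁺. Suppose g : [r⁻, r⁺] → ℂ is twice continuously differentiable, not identically zero, satisfies the Dirichlet conditions g(r⁻) = g(r⁺) = 0, and satisfies −ε(g''(r) + (1/r)g'(r) − (m²/r²)g(r)) + i m ω(r) g(r) = λ g(r) for all r ∈ [r⁻, r⁺] and some λ ∈ ℂ. Then Re λ ≥ ε m² / (r⁺)² > 0 and m a⁻ < Im λ < m a⁺. -/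
lemma aux_flat (a b : ℝ) (h h' : ℝ → ℝ) (hab : a < b) (hc : ContinuousOn h (Set.Icc a b))
    (hd : ∀ r ∈ Set.Ioo a b, HasDerivAt h (h' r) r) (hn : ∀ r ∈ Set.Ioo a b, 0 ≤ h' r)
    (ha : h a = 0) (hb : h b = 0) : ∀ r ∈ Set.Ioo a b, h' r = 0 := by
  have hm : MonotoneOn h (Set.Icc a b) := by
    apply monotoneOn_of_deriv_nonneg (convex_Icc a b) hc
    · rw [interior_Icc]
      exact fun r hr => (hd r hr).differentiableAt.differentiableWithinAt
    · rw [interior_Icc]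
      intro r hr
      rw [(hd r hr).deriv]
      exact hn r hr
  have hz : ∀ r ∈ Set.Icc a b, h r = 0 := fun r hr => le_antisymm
    (hb ▸ hm hr (Set.right_mem_Icc.2 hab.le) hr.2)
    (by have := hm (Set.left_mem_Icc.2 hab.le) hr hr.1; rwa [ha] at this)
  intro r hr
  have h0 : HasDerivAt h 0 r := by
    apply (hasDerivAt_const r (0:ℝ)).congr_of_eventuallyEq
    filter_upwards [Ioo_mem_nhds hr.1 hr.2] with x hx
    exact hz x (Set.Ioo_subset_Icc_self hx)
  exact (hd r hr).unique h0

/-- Dirichlet eigenvalues of the radial advection-diffusion operator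
`L_{m,ε} g = −ε(g'' + (1/r)g' − (m²/r²)g) + i m ω(r) g` on the annulus interval `[r⁻, r⁺]`,
for a continuous strictly increasing potential `ω` with `ω(r⁻) = a⁻`, `ω(r⁺) = a⁺`, satisfy
`Re λ ≥ ε m²/(r⁺)² > 0` and `m a⁻ < Im λ < m a⁺`. -/
theorem annulus_eigenvalue_strip
    (rm rp : ℝ) (hrm : 0 < rm) (hrmrp : rm < rp)
    (ε : ℝ) (hε : 0 < ε) (m : ℕ) (hm : 0 < m)
    (ω : ℝ → ℝ) (hωc : ContinuousOn ω (Set.Icc rm rp))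
    (hωmono : StrictMonoOn ω (Set.Icc rm rp))
    (am ap : ℝ) (ham : ω rm = am) (hap : ω rp = ap)
    (g : ℝ → ℂ) (hg : ContDiffOn ℝ 2 g (Set.Icc rm rp))
    (hgne : ∃ r ∈ Set.Icc rm rp, g r ≠ 0)
    (hgm : g rm = 0) (hgp : g rp = 0)
    (lam : ℂ)
    (heq : ∀ r ∈ Set.Icc rm rp,
      -(ε : ℂ) * (derivWithin (derivWithin g (Set.Icc rm rp)) (Set.Icc rm rp) r
          + (1 / (r : ℂ)) * derivWithin g (Set.Icc rm rp) r
          - ((m : ℂ) ^ 2 / (r : ℂ) ^ 2) * g r)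
        + Complex.I * (m : ℂ) * (ω r : ℂ) * g r = lam * g r) :
    (ε * (m : ℝ) ^ 2 / rp ^ 2 ≤ lam.re ∧ 0 < ε * (m : ℝ) ^ 2 / rp ^ 2) ∧
    ((m : ℝ) * am < lam.im ∧ lam.im < (m : ℝ) * ap) := by
  obtain ⟨r0, hr0, hg0⟩ := hgne
  have hr0' : r0 ∈ Set.Ioo rm rp := by
    refine ⟨lt_of_le_of_ne hr0.1 ?_, lt_of_le_of_ne hr0.2 ?_⟩
    · rintro rfl; exact hg0 hgm
    · rintro rfl; exact hg0 hgp
  have hu : UniqueDiffOn ℝ (Set.Icc rm rp) := uniqueDiffOn_Icc hrmrp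
  have hp1 : ContDiffOn ℝ 1 (derivWithin g (Set.Icc rm rp)) (Set.Icc rm rp) :=
    hg.derivWithin hu (by norm_num)
  have hdg : ∀ r ∈ Set.Ioo rm rp, HasDerivAt g (derivWithin g (Set.Icc rm rp) r) r := by
    intro r hr
    exact ((hg.differentiableOn (by norm_num)) r
      (Set.Ioo_subset_Icc_self hr)).hasDerivWithinAt.hasDerivAt (Icc_mem_nhds hr.1 hr.2)
  have hdp : ∀ r ∈ Set.Ioo rm rp, HasDerivAt (derivWithin g (Set.Icc rm rp))
      (derivWithin (derivWithin g (Set.Icc rm rp)) (Set.Icc rm rp) r) r := by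
    intro r hr
    exact ((hp1.differentiableOn (by norm_num)) r
      (Set.Ioo_subset_Icc_self hr)).hasDerivWithinAt.hasDerivAt (Icc_mem_nhds hr.1 hr.2)
  have hpc := hp1.continuousOn
  have hgc := hg.continuousOn
  generalize derivWithin (derivWithin g (Set.Icc rm rp)) (Set.Icc rm rp) = q at *
  generalize derivWithin g (Set.Icc rm rp) = p at *
  let G : ℝ → ℂ := fun r => (ε : ℂ) * ((r : ℂ) * p r * star (g r))
  have hGc : ContinuousOn G (Set.Icc rm rp) := by
    have : ContinuousOn (fun r : ℝ => (r : ℂ)) (Set.Icc rm rp) :=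
      Complex.continuous_ofReal.continuousOn
    exact continuousOn_const.mul ((this.mul hpc).mul hgc.star)
  have hGm : G rm = 0 := by simp [G, hgm]
  have hGp : G rp = 0 := by simp [G, hgp]
  let A : ℝ → ℝ := fun r => ε * r * Complex.normSq (p r)
    + r * (ε * (m:ℝ)^2 / r^2 - lam.re) * Complex.normSq (g r)
  let B : ℝ → ℝ := fun r => r * (m * ω r - lam.im) * Complex.normSq (g r)
  have hGd : ∀ r ∈ Set.Ioo rm rp, HasDerivAt G ((A r : ℂ) + (B r : ℂ) * Complex.I) r := by
    intro r hr
    have hr1 : (r : ℂ) ≠ 0 := by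
      exact_mod_cast (hrm.trans hr.1).ne'
    have h1 : HasDerivAt (fun r : ℝ => (r : ℂ)) 1 r := Complex.ofRealCLM.hasDerivAt
    have h2 := (((h1.mul (hdp r hr)).mul (hdg r hr).star).const_mul (ε : ℂ))
    refine h2.congr_deriv ?_
    have e := heq r (Set.Ioo_subset_Icc_self hr)
    have e2 : (ε:ℂ) * (r * q r + p r) =
        r * ((ε * (m:ℂ)^2 / r^2 + Complex.I * m * ω r - lam) * g r) := by
      have : (r : ℂ) * ((1 / (r : ℂ)) * p r) = p r := by field_simp
      linear_combination (-(r:ℂ)) * e - ε * this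
    have n1 : ((Complex.normSq (p r) : ℝ) : ℂ) = p r * star (p r) := (Complex.mul_conj _).symm
    have n2 : ((Complex.normSq (g r) : ℝ) : ℂ) = g r * star (g r) := (Complex.mul_conj _).symm
    have hl : lam = lam.re + lam.im * Complex.I := (Complex.re_add_im lam).symm
    simp only [A, B, Pi.mul_apply]
    push_cast
    rw [n1, n2]
    linear_combination star (g r) * e2 - r * g r * star (g r) * hl
  have hre : ∀ r ∈ Set.Ioo rm rp, HasDerivAt (fun r => (G r).re) (A r) r := by
    intro r hr
    have := Complex.reCLM.hasFDerivAt.comp_hasDerivAt r (hGd r hr)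
    simpa [Function.comp_def] using this
  have him : ∀ r ∈ Set.Ioo rm rp, HasDerivAt (fun r => (G r).im) (B r) r := by
    intro r hr
    have := Complex.imCLM.hasFDerivAt.comp_hasDerivAt r (hGd r hr)
    simpa [Function.comp_def] using this
  have hrec : ContinuousOn (fun r => (G r).re) (Set.Icc rm rp) :=
    Complex.continuous_re.comp_continuousOn hGc
  have himc : ContinuousOn (fun r => (G r).im) (Set.Icc rm rp) :=
    Complex.continuous_im.comp_continuousOn hGc
  have hm' : (0:ℝ) < m := by exact_mod_cast hm
  have hrp : 0 < rp := hrm.trans hrmrp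
  have hN : 0 < Complex.normSq (g r0) := Complex.normSq_pos.2 hg0
  have hr0p : 0 < r0 := hrm.trans hr0'.1
  have hωl : ∀ r ∈ Set.Ioo rm rp, am < ω r := fun r hr => ham ▸
    hωmono (Set.left_mem_Icc.2 hrmrp.le) (Set.Ioo_subset_Icc_self hr) hr.1
  have hωr : ∀ r ∈ Set.Ioo rm rp, ω r < ap := fun r hr => hap ▸
    hωmono (Set.Ioo_subset_Icc_self hr) (Set.right_mem_Icc.2 hrmrp.le) hr.2
  refine ⟨⟨?_, by positivity⟩, ?_, ?_⟩
  · by_contra! hlt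
    have key : ∀ r ∈ Set.Ioo rm rp, 0 < ε * (m:ℝ)^2 / r^2 - lam.re := by
      intro r hr
      have hr1 : 0 < r := hrm.trans hr.1
      have : ε * (m:ℝ)^2 / rp^2 ≤ ε * (m:ℝ)^2 / r^2 := by
        have := hr.2.le
        gcongr
      linarith
    have hz := aux_flat rm rp _ A hrmrp hrec hre (fun r hr => by
      have hr1 : 0 < r := hrm.trans hr.1
      have h1 := key r hr
      have h2 := Complex.normSq_nonneg (p r)
      have h3 := Complex.normSq_nonneg (g r)
      simp only [A]
      positivity) (by simp [hGm]) (by simp [hGp]) r0 hr0'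
    have h1 := key r0 hr0'
    have h2 : 0 ≤ ε * r0 * Complex.normSq (p r0) :=
      mul_nonneg (by positivity) (Complex.normSq_nonneg _)
    have h3 := mul_pos (mul_pos hr0p h1) hN
    simp only [A] at hz
    linarith
  · by_contra! hle
    have key : ∀ r ∈ Set.Ioo rm rp, 0 < m * ω r - lam.im := by
      intro r hr
      have := mul_lt_mul_of_pos_left (hωl r hr) hm'
      linarith
    have hz := aux_flat rm rp _ B hrmrp himc him (fun r hr =>
      mul_nonneg (mul_pos (hrm.trans hr.1) (key r hr)).le (Complex.normSq_nonneg _))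
      (by simp [hGm]) (by simp [hGp]) r0 hr0'
    exact (mul_pos (mul_pos hr0p (key r0 hr0')) hN).ne' hz
  · by_contra! hle
    have key : ∀ r ∈ Set.Ioo rm rp, 0 < -(m * ω r - lam.im) := by
      intro r hr
      have := mul_lt_mul_of_pos_left (hωr r hr) hm'
      linarith
    have hz := aux_flat rm rp _ (fun r => - B r) hrmrp himc.neg (fun r hr => (him r hr).neg)
      (fun r hr => by
        have := mul_nonneg (mul_pos (hrm.trans hr.1) (key r hr)).le (Complex.normSq_nonneg (g r))
        simp only [B]
        linarith)
      (by simp [hGm]) (by simp [hGp]) r0 hr0'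
    have := mul_pos (mul_pos hr0p (key r0 hr0')) hN
    simp only [B] at hz
    linarith
end

section
/- Let ε > 0, let ω : (0,∞) → ℝ be twice continuously differentiable, let f₀ : ℝ → ℝ be continuous with F(t) = ∫₀ᵗ f₀(t')dt', let f₁ ∈ ℝ, and set f = f₀ + f₁. Let c : ℝ × (0,∞) × ℝ → ℂ be such that c(t,r,θ) is continuously differentiable in t and twice continuously differentiable in (r,θ), and suppose c satisfies c_t + f(t) ω(r) c_θ = ε (c_{rr} + (1/r) c_r + (1/r²) c_{θθ}) everywhere. Define v(t,r,φ) = c(t, r, φ + ω(r) F(t)). Then v satisfies v_t + f₁ ω(r) v_φ = ε ( v_{rr} + (1/r) v_r + (1/r²) v_{φφ} − F(t) ( (ω'(r)/r + ω''(r)) v_φ + 2 ω'(r) v_{rφ} ) + F(t)² ω'(r)² v_{φφ} ) everywhere. -/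
theorem sl_partial {g : ℝ → ℝ → ℂ} {x y : ℝ}
    (hg : DifferentiableAt ℝ (fun q : ℝ × ℝ => g q.1 q.2) (x, y)) :
    deriv (fun x' => g x' y) x = fderiv ℝ (fun q : ℝ × ℝ => g q.1 q.2) (x, y) (1, 0) ∧
    deriv (fun y' => g x y') y = fderiv ℝ (fun q : ℝ × ℝ => g q.1 q.2) (x, y) (0, 1) := by
  constructor
  · have h : HasDerivAt (fun x' : ℝ => (x', y)) ((1 : ℝ), (0 : ℝ)) x :=
      (hasDerivAt_id x).prodMk (hasDerivAt_const x y)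
    exact (hg.hasFDerivAt.comp_hasDerivAt x h).deriv
  · have h : HasDerivAt (fun y' : ℝ => (x, y')) ((0 : ℝ), (1 : ℝ)) y :=
      (hasDerivAt_const y x).prodMk (hasDerivAt_id y)
    exact (hg.hasFDerivAt.comp_hasDerivAt y h).deriv

theorem sl_chain {g : ℝ → ℝ → ℂ} {a b : ℝ → ℝ} {a' b' s : ℝ}
    (hg : Differentiable ℝ (fun q : ℝ × ℝ => g q.1 q.2))
    (ha : HasDerivAt a a' s) (hb : HasDerivAt b b' s) :
    HasDerivAt (fun s => g (a s) (b s))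
      ((a' : ℂ) * deriv (fun x' => g x' (b s)) (a s)
        + (b' : ℂ) * deriv (fun y' => g (a s) y') (b s)) s := by
  rw [(sl_partial (hg (a s, b s))).1, (sl_partial (hg (a s, b s))).2]
  have h := (hg (a s, b s)).hasFDerivAt.comp_hasDerivAt s (ha.prodMk hb)
  have e : ((a', b') : ℝ × ℝ) = a' • ((1 : ℝ), (0 : ℝ)) + b' • ((0 : ℝ), (1 : ℝ)) := by simp
  rw [e, map_add, map_smul, map_smul] at h
  rw [Complex.real_smul, Complex.real_smul] at h
  exact h

theorem sl_second {g : ℝ → ℝ → ℂ} (hg : ContDiff ℝ 2 (fun q : ℝ × ℝ => g q.1 q.2)) :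
    Differentiable ℝ (fun q : ℝ × ℝ => deriv (fun x' => g x' q.2) q.1) ∧
    Differentiable ℝ (fun q : ℝ × ℝ => deriv (fun y' => g q.1 y') q.2) ∧
    ∀ x y, deriv (fun y' => deriv (fun x' => g x' y') x) y
      = deriv (fun x' => deriv (fun y' => g x' y') y) x := by
  have hd : Differentiable ℝ (fun q : ℝ × ℝ => g q.1 q.2) := hg.differentiable (by norm_num)
  have hdd : Differentiable ℝ (fderiv ℝ (fun q : ℝ × ℝ => g q.1 q.2)) :=
    (hg.fderiv_right (m := 1) (by norm_num)).differentiable (by norm_num)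
  have eA : (fun q : ℝ × ℝ => deriv (fun x' => g x' q.2) q.1)
      = fun q => fderiv ℝ (fun q : ℝ × ℝ => g q.1 q.2) q (1, 0) := by
    funext q; exact (sl_partial (hd (q.1, q.2))).1
  have eB : (fun q : ℝ × ℝ => deriv (fun y' => g q.1 y') q.2)
      = fun q => fderiv ℝ (fun q : ℝ × ℝ => g q.1 q.2) q (0, 1) := by
    funext q; exact (sl_partial (hd (q.1, q.2))).2
  have dA : Differentiable ℝ (fun q : ℝ × ℝ => deriv (fun x' => g x' q.2) q.1) := by
    rw [eA]; exact fun q => (hdd q).clm_apply (differentiableAt_const _)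
  have dB : Differentiable ℝ (fun q : ℝ × ℝ => deriv (fun y' => g q.1 y') q.2) := by
    rw [eB]; exact fun q => (hdd q).clm_apply (differentiableAt_const _)
  refine ⟨dA, dB, fun x y => ?_⟩
  have h1 := (sl_partial (g := fun x y => deriv (fun x' => g x' y) x) (dA (x, y))).2
  have h2 := (sl_partial (g := fun x y => deriv (fun y' => g x y') y) (dB (x, y))).1
  rw [eA] at h1
  rw [eB] at h2
  refine h1.trans (Eq.trans ?_ h2.symm)
  have k : ∀ u w : ℝ × ℝ, fderiv ℝ (fun q => fderiv ℝ (fun q : ℝ × ℝ => g q.1 q.2) q u) (x, y) w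
      = fderiv ℝ (fderiv ℝ (fun q : ℝ × ℝ => g q.1 q.2)) (x, y) w u := by
    intro u w
    have := ((hdd (x, y)).hasFDerivAt.clm_apply (hasFDerivAt_const u (x, y))).fderiv
    rw [this]; simp
  rw [k, k]
  exact (hg.contDiffAt.isSymmSndFDerivAt (by simp)).eq _ _

/-- Transformation of the time-dependent polar advection-diffusion equation
`c_t + f(t)ω(r)c_θ = ε(c_{rr} + (1/r)c_r + (1/r²)c_{θθ})` to the co-moving stream-line
coordinate `φ = θ − ω(r)F(t)`: the function `v(t,r,φ) = c(t,r,φ+ω(r)F(t))` satisfies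
`v_t + f₁ ω v_φ = ε(v_{rr} + (1/r)v_r + (1/r²)v_{φφ}
  − F(t)((ω'/r + ω'')v_φ + 2ω' v_{rφ}) + F(t)²(ω')² v_{φφ})`. -/
theorem streamline_transformation
    (ε : ℝ) (hε : 0 < ε)
    (ω : ℝ → ℝ) (hω : ContDiffOn ℝ 2 ω (Set.Ioi 0))
    (f₀ : ℝ → ℝ) (hf₀ : Continuous f₀)
    (F : ℝ → ℝ) (hF : ∀ t, F t = ∫ t' in (0:ℝ)..t, f₀ t')
    (f₁ : ℝ) (f : ℝ → ℝ) (hf : ∀ t, f t = f₀ t + f₁)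
    (c : ℝ → ℝ → ℝ → ℂ)
    (hc1 : ContDiff ℝ 1 (fun p : ℝ × ℝ × ℝ => c p.1 p.2.1 p.2.2))
    (hc2 : ∀ t, ContDiff ℝ 2 (fun q : ℝ × ℝ => c t q.1 q.2))
    (heq : ∀ t : ℝ, ∀ r ∈ Set.Ioi (0:ℝ), ∀ θ : ℝ,
      deriv (fun t' => c t' r θ) t
          + (f t : ℂ) * (ω r : ℂ) * deriv (fun θ' => c t r θ') θ
        = (ε : ℂ) * (iteratedDeriv 2 (fun r' => c t r' θ) r
            + (1 / (r : ℂ)) * deriv (fun r' => c t r' θ) r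
            + (1 / (r : ℂ) ^ 2) * iteratedDeriv 2 (fun θ' => c t r θ') θ))
    (v : ℝ → ℝ → ℝ → ℂ)
    (hv : ∀ t r φ, v t r φ = c t r (φ + ω r * F t)) :
    ∀ t : ℝ, ∀ r ∈ Set.Ioi (0:ℝ), ∀ φ : ℝ,
      deriv (fun t' => v t' r φ) t
          + (f₁ : ℂ) * (ω r : ℂ) * deriv (fun φ' => v t r φ') φ
        = (ε : ℂ) * (iteratedDeriv 2 (fun r' => v t r' φ) r
            + (1 / (r : ℂ)) * deriv (fun r' => v t r' φ) r
            + (1 / (r : ℂ) ^ 2) * iteratedDeriv 2 (fun φ' => v t r φ') φ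
            - (F t : ℂ) * (((deriv ω r / r + deriv (deriv ω) r : ℝ) : ℂ)
                  * deriv (fun φ' => v t r φ') φ
                + 2 * ((deriv ω r : ℝ) : ℂ)
                  * deriv (fun r' => deriv (fun φ' => v t r' φ') φ) r)
            + ((F t : ℝ) : ℂ) ^ 2 * ((deriv ω r : ℝ) : ℂ) ^ 2
                * iteratedDeriv 2 (fun φ' => v t r φ') φ) := by
  intro t r hr φ
  have hr0 : (0:ℝ) < r := hr
  have hFd : HasDerivAt F (f₀ t) t := by
    have : F = fun t => ∫ t' in (0:ℝ)..t, f₀ t' := funext hF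
    rw [this]
    exact intervalIntegral.integral_hasDerivAt_right (hf₀.intervalIntegrable _ _)
      (hf₀.stronglyMeasurableAtFilter _ _) hf₀.continuousAt
  have hωd : ∀ s, 0 < s → HasDerivAt ω (deriv ω s) s := fun s hs =>
    ((hω.contDiffAt (Ioi_mem_nhds hs)).differentiableAt (by norm_num)).hasDerivAt
  have hωdd : HasDerivAt (deriv ω) (deriv (deriv ω) r) r := by
    have h1 : ContDiffOn ℝ 1 (deriv ω) (Set.Ioi 0) :=
      hω.deriv_of_isOpen isOpen_Ioi (by norm_num)
    exact ((h1.contDiffAt (Ioi_mem_nhds hr0)).differentiableAt (by norm_num)).hasDerivAt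
  have hv' : v = fun t r φ => c t r (φ + ω r * F t) := by
    funext t r φ; exact hv t r φ
  subst hv'
  have hg : Differentiable ℝ (fun q : ℝ × ℝ => c t q.1 q.2) := (hc2 t).differentiable (by norm_num)
  obtain ⟨dA, dB, hsym⟩ := sl_second (hc2 t)
  have hT : Differentiable ℝ (fun q : ℝ × ℝ => c q.1 r q.2) := by
    have h := hc1.differentiable (by norm_num)
    have h2 : Differentiable ℝ (fun q : ℝ × ℝ => ((q.1, r, q.2) : ℝ × ℝ × ℝ)) := by fun_prop
    exact h.comp h2
  -- time derivative
  have e1 := (sl_chain (g := fun t θ => c t r θ) hT (hasDerivAt_id t)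
    ((hFd.const_mul (ω r)).const_add φ)).deriv
  -- angular derivatives
  have e2 : ∀ r' φ', deriv (fun φ' => c t r' (φ' + ω r' * F t)) φ'
      = deriv (fun θ => c t r' θ) (φ' + ω r' * F t) := fun r' φ' =>
    deriv_comp_add_const (fun θ => c t r' θ) _ _
  have e3 : iteratedDeriv 2 (fun φ' => c t r (φ' + ω r * F t)) φ
      = deriv (fun θ => deriv (fun θ' => c t r θ') θ) (φ + ω r * F t) := by
    rw [iteratedDeriv_succ, iteratedDeriv_one]
    rw [show deriv (fun φ' => c t r (φ' + ω r * F t))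
      = fun φ' => deriv (fun θ => c t r θ) (φ' + ω r * F t) from funext (e2 r)]
    exact deriv_comp_add_const (fun θ => deriv (fun θ' => c t r θ') θ) _ _
  have hb : ∀ s, 0 < s → HasDerivAt (fun s => φ + ω s * F t) (deriv ω s * F t) s := fun s hs =>
    ((hωd s hs).mul_const (F t)).const_add φ
  have e4 : ∀ s, 0 < s → deriv (fun r' => c t r' (φ + ω r' * F t)) s
      = deriv (fun r' => c t r' (φ + ω s * F t)) s
        + ((deriv ω s * F t : ℝ) : ℂ) * deriv (fun θ => c t s θ) (φ + ω s * F t) := by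
    intro s hs
    have := (sl_chain hg (hasDerivAt_id s) (hb s hs)).deriv
    simpa using this
  have e5 := sl_chain (g := fun x y => deriv (fun y' => c t x y') y) dB (hasDerivAt_id r) (hb r hr0)
  have e6 := sl_chain (g := fun x y => deriv (fun x' => c t x' y) x) dA (hasDerivAt_id r) (hb r hr0)
  have e7 := e6.add ((hωdd.mul_const (F t)).ofReal_comp.mul e5)
  have e8 : deriv (fun r' => deriv (fun r' => c t r' (φ + ω r' * F t)) r') r = deriv
      ((fun s => deriv (fun x' => c t x' (φ + ω s * F t)) (id s)) +
      (fun y => ((deriv ω y * F t : ℝ) : ℂ)) *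
        fun s => deriv (fun y' => c t (id s) y') (φ + ω s * F t)) r := by
    refine Filter.EventuallyEq.deriv_eq ?_
    filter_upwards [Ioi_mem_nhds hr0] with s hs
    exact e4 s hs
  have e8 := e8.trans e7.deriv
  have e10 : iteratedDeriv 2 (fun r' => c t r' (φ + ω r' * F t)) r
      = deriv (fun r' => deriv (fun r' => c t r' (φ + ω r' * F t)) r') r := by
    rw [iteratedDeriv_succ, iteratedDeriv_one]
  have e9 := e5.deriv
  have h0 := heq t r hr (φ + ω r * F t)
  rw [iteratedDeriv_succ, iteratedDeriv_one, iteratedDeriv_succ, iteratedDeriv_one, hf] at h0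
  have hs := hsym r (φ + ω r * F t)
  simp only [id] at e1 e8 e9
  simp only [e2]
  rw [e1, e10, e8, e9, e3, e4 r hr0, hs]
  push_cast at h0 ⊢
  linear_combination h0
end

section
/- Let w ∈ ℂ with Im w < 0. Then, using the principal branch of the complex square root, ∫₀¹ √( i w (u² − 1) ) du = (π/4) √( −i w ). -/
lemma sqrt_real_mul (r : ℝ) (hr : 0 ≤ r) (z : ℂ) :
    ((r : ℂ) * z) ^ ((1:ℂ)/2) = ((√r : ℝ) : ℂ) * z ^ ((1:ℂ)/2) := by
  rcases hr.eq_or_lt with rfl | hr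
  · simp
  by_cases hz : z = 0
  · subst hz; simp
  have hr' : (r : ℂ) ≠ 0 := by exact_mod_cast hr.ne'
  rw [Complex.cpow_def_of_ne_zero (mul_ne_zero hr' hz), Complex.log_ofReal_mul hr hz, add_mul,
    Complex.exp_add, ← Complex.cpow_def_of_ne_zero hz, Real.sqrt_eq_rpow,
    Complex.ofReal_cpow hr.le, Complex.cpow_def_of_ne_zero hr', Complex.ofReal_log hr.le]
  norm_num

lemma half_integral : ∫ x in (0 : ℝ)..1, √(1 - x ^ 2 : ℝ) = Real.pi / 4 := by
  have h := integral_sqrt_one_sub_sq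
  have hc : Continuous fun x : ℝ => √(1 - x ^ 2 : ℝ) := by fun_prop
  rw [← intervalIntegral.integral_add_adjacent_intervals
    (hc.intervalIntegrable (-1) 0) (hc.intervalIntegrable 0 1)] at h
  have h2 := intervalIntegral.integral_comp_neg (a := 0) (b := 1) fun x : ℝ => √(1 - x ^ 2 : ℝ)
  simp only [neg_sq, neg_zero] at h2
  linarith


/-- For `Im w < 0`, with the principal branch of the complex square root,
`∫₀¹ √(i w (u² − 1)) du = (π/4) √(−i w)`. -/
theorem WKBJ_phase_integral_quadratic
    (w : ℂ) (hw : w.im < 0) :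
    (∫ u in (0:ℝ)..1, (Complex.I * w * ((u : ℂ) ^ 2 - 1)) ^ ((1:ℂ)/2))
      = ((Real.pi : ℂ) / 4) * ((-Complex.I * w) ^ ((1:ℂ)/2)) := by
  rw [intervalIntegral.integral_congr
    (g := fun u : ℝ => ((√(1 - u ^ 2) : ℝ) : ℂ) * (-Complex.I * w) ^ ((1:ℂ)/2))]
  · rw [intervalIntegral.integral_mul_const, intervalIntegral.integral_ofReal, half_integral]
    push_cast
    rfl
  · intro u hu
    rw [Set.uIcc_of_le zero_le_one] at hu
    have h : 0 ≤ 1 - u ^ 2 := by nlinarith [hu.1, hu.2]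
    simp only
    rw [← sqrt_real_mul _ h]
    congr 1
    push_cast
    ring
end
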